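/- For all cut-free named GS4 derivations P of the sequent ⊢Γ,A with A non-atomic, the axiom graph is invariant under isolation: ⟦isl(P,A)⟧ = ⟦P⟧. -/

import Mathlib

open scoped Classical

noncomputable section

namespace GS4

/-- Named classical propositional formulas over atoms `α`, with names in `ℕ`. -/
inductive NForm (α : Type) : Type
  | atom : ℕ → α → NForm α
  | or   : NForm α → NForm α → NForm α
  | and  : NForm α → NForm α → NForm α

variable {α : Type}

/-- Name-preserving De Morgan negation, w.r.t. an involution `bar` on atoms. -/
def negF (bar : α → α) : NForm α → NForm α
  | .atom x a => .atom x (bar a)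
  | .or A B => .and (negF bar A) (negF bar B)
  | .and A B => .or (negF bar A) (negF bar B)

/-- The set of names occurring in a named formula. -/
def NForm.names : NForm α → Set ℕ
  | .atom x _ => {x}
  | .or A B => A.names ∪ B.names
  | .and A B => A.names ∪ B.names

/-- A named formula is sharing-free if every name occurs at most once in it. -/
def NForm.sharingFree : NForm α → Prop
  | .atom _ _ => True
  | .or A B => A.sharingFree ∧ B.sharingFree ∧ Disjoint A.names B.names
  | .and A B => A.sharingFree ∧ B.sharingFree ∧ Disjoint A.names B.names

def NForm.isAtom : NForm α → Prop
  | .atom _ _ => True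
  | _ => False

/-- Anonymous formulas (shapes): `A ≡ B` iff their shapes coincide. -/
inductive Shape (α : Type) : Type
  | atom : α → Shape α
  | or   : Shape α → Shape α → Shape α
  | and  : Shape α → Shape α → Shape α

def NForm.shape : NForm α → Shape α
  | .atom _ a => .atom a
  | .or A B => .or A.shape B.shape
  | .and A B => .and A.shape B.shape

/-- `HasAtom A x a`: the atomic formula `x:a` occurs in `A`. -/
def HasAtom : NForm α → ℕ → α → Prop
  | .atom y b, x, a => y = x ∧ b = a
  | .or A B, x, a => HasAtom A x a ∨ HasAtom B x a
  | .and A B, x, a => HasAtom A x a ∨ HasAtom B x a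

/-- Names of a finite set of named formulas. -/
def snames (Γ : Finset (NForm α)) : Set ℕ := ⋃ A ∈ Γ, A.names

/-- A finite set of named formulas is sharing-free if all its elements are
sharing-free with pairwise disjoint name sets. -/
def SFSet (Γ : Finset (NForm α)) : Prop :=
  (∀ A ∈ Γ, A.sharingFree) ∧
  ∀ A ∈ Γ, ∀ B ∈ Γ, A ≠ B → Disjoint A.names B.names

/-- `x:a` occurs in some formula of `Γ` (i.e. `Γ[x] = a` for sharing-free `Γ`). -/
def HasAtomS (Γ : Finset (NForm α)) (x : ℕ) (a : α) : Prop :=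
  ∃ A ∈ Γ, HasAtom A x a

/-- Branch sets of named formulas. -/
def BrF : NForm α → Set (Set ℕ)
  | .atom x _ => {{x}}
  | .or A B => {X | ∃ Y ∈ BrF A, ∃ Z ∈ BrF B, X = Y ∪ Z}
  | .and A B => BrF A ∪ BrF B

/-- Branch sets of sequents (finite sharing-free sets of named formulas). -/
def BrS (Γ : Finset (NForm α)) : Set (Set ℕ) :=
  {X | X ⊆ snames Γ ∧ ∀ A ∈ Γ, X ∩ A.names ∈ BrF A}

/-! ## Branch-labeled name graphs -/

/-- A branch-labeled name graph: vertices and a relation between unordered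
pairs of vertices and branch labels. -/
structure BLGraph : Type where
  verts : Set ℕ
  rel : Sym2 ℕ → Set ℕ → Prop

/-- Well-formedness of a bl-graph: related pairs consist of distinct vertices,
labels are sets of vertices, and each edge is included in its labels. -/
def BLGraph.IsBL (G : BLGraph) : Prop :=
  ∀ e X, G.rel e X → ¬ e.IsDiag ∧ X ⊆ G.verts ∧ ∀ v ∈ e, v ∈ X

def BLGraph.Edges (G : BLGraph) : Set (Sym2 ℕ) := {e | ∃ X, G.rel e X}

def BLGraph.Br (G : BLGraph) : Set (Set ℕ) := {X | ∃ e, G.rel e X}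

def BLGraph.union (G H : BLGraph) : BLGraph :=
  ⟨G.verts ∪ H.verts, fun e X => G.rel e X ∨ H.rel e X⟩

/-- Restriction `G↾_S` of a bl-graph. -/
def BLGraph.restrict (G : BLGraph) (S : Set ℕ) : BLGraph :=
  ⟨G.verts ∩ S, fun e X => G.rel e X ∧ X ⊆ S⟩

/-- The interface-relativized edge-branch relation `e ⊰^I_G X`. -/
def BLGraph.relI (G : BLGraph) (I : Set ℕ) (e : Sym2 ℕ) (X : Set ℕ) : Prop :=
  ∃ Y, G.rel e Y ∧ X = Y \ I

/-- `z 0, …, z (n-1)` is an `X`-labeled alternating path between `G` and `H`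
through the interface `I`. -/
def AltPath (G H : BLGraph) (I X : Set ℕ) (n : ℕ) (z : ℕ → ℕ) : Prop :=
  1 < n ∧
  (∀ i < n, ∀ j < n, z i = z j → i = j) ∧
  (∀ i, 0 < i → i + 1 < n → z i ∈ I) ∧
  ((∀ i, i + 1 < n →
      (Even i → G.relI I s(z i, z (i + 1)) X) ∧ (¬ Even i → H.relI I s(z i, z (i + 1)) X)) ∨
   (∀ i, i + 1 < n →
      (Even i → H.relI I s(z i, z (i + 1)) X) ∧ (¬ Even i → G.relI I s(z i, z (i + 1)) X)))

/-- Composition of bl-graphs over an interface `I`. -/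
def BLGraph.comp (G H : BLGraph) (I : Set ℕ) : BLGraph :=
  ⟨(G.verts ∪ H.verts) \ I,
   fun e X => ∃ n z, AltPath G H I X n z ∧ z 0 ∉ I ∧ z (n - 1) ∉ I ∧
     e = s(z 0, z (n - 1))⟩

/-- The weakening operator on bl-graphs: add vertices `V` and extend every
branch label by a member of `Brs`. -/
def blwk (V : Set ℕ) (Brs : Set (Set ℕ)) (G : BLGraph) : BLGraph :=
  ⟨G.verts ∪ V, fun e X => ∃ Y Z, G.rel e Y ∧ Z ∈ Brs ∧ X = Y ∪ Z⟩

/-- The bl-identity graph `id_{A,C}` on a pair of dual formulas. -/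
def blid : NForm α → NForm α → BLGraph
  | .atom x _, .atom y _ => ⟨{x, y}, fun e X => e = s(x, y) ∧ X = {x, y}⟩
  | .or A1 A2, .and C1 C2 =>
      (blwk A2.names (BrF A2) (blid A1 C1)).union (blwk A1.names (BrF A1) (blid A2 C2))
  | .and A1 A2, .or C1 C2 =>
      (blwk C2.names (BrF C2) (blid A1 C1)).union (blwk C1.names (BrF C1) (blid A2 C2))
  | _, _ => ⟨∅, fun _ _ => False⟩

/-! ## Simple name graphs -/

/-- A simple name graph. -/
structure NGraph : Type where
  verts : Set ℕ
  edges : Set (Sym2 ℕ)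

/-- Subgraph relation `H ⊑ G`. -/
def NGraph.Sub (H G : NGraph) : Prop := H.verts ⊆ G.verts ∧ H.edges ⊆ G.edges

def NGraph.union (G H : NGraph) : NGraph := ⟨G.verts ∪ H.verts, G.edges ∪ H.edges⟩

/-- Induced subgraph `G↾_S`. -/
def NGraph.restrict (G : NGraph) (S : Set ℕ) : NGraph :=
  ⟨G.verts ∩ S, {e ∈ G.edges | ∀ v ∈ e, v ∈ S}⟩

/-- Alternating paths between simple name graphs through an interface. -/
def NAltPath (G H : NGraph) (I : Set ℕ) (n : ℕ) (z : ℕ → ℕ) : Prop :=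
  0 < n ∧
  (∀ i < n, ∀ j < n, z i = z j → i = j) ∧
  (∀ i, 0 < i → i + 1 < n → z i ∈ I) ∧
  ((∀ i, i + 1 < n →
      (Even i → s(z i, z (i + 1)) ∈ G.edges) ∧ (¬ Even i → s(z i, z (i + 1)) ∈ H.edges)) ∨
   (∀ i, i + 1 < n →
      (Even i → s(z i, z (i + 1)) ∈ H.edges) ∧ (¬ Even i → s(z i, z (i + 1)) ∈ G.edges)))

/-- Composition of simple name graphs over an interface. -/
def NGraph.comp (G H : NGraph) (I : Set ℕ) : NGraph :=
  ⟨(G.verts ∪ H.verts) \ I,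
   {e | ∃ x y, x ≠ y ∧ x ∈ (G.verts ∪ H.verts) \ I ∧ y ∈ (G.verts ∪ H.verts) \ I ∧
        e = s(x, y) ∧ ∃ n z, NAltPath G H I n z ∧ z 0 = x ∧ z (n - 1) = y}⟩

/-- The identity graph `Id_{A,C}` on a pair of dual formulas. -/
def idg : NForm α → NForm α → NGraph
  | .atom x _, .atom y _ => ⟨{x, y}, {s(x, y)}⟩
  | .or A1 A2, .and C1 C2 => (idg A1 C1).union (idg A2 C2)
  | .and A1 A2, .or C1 C2 => (idg A1 C1).union (idg A2 C2)
  | _, _ => ⟨∅, ∅⟩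

/-- The edgeless (weakening) graph on the names of `Γ`. -/
def wkg (Γ : Finset (NForm α)) : NGraph := ⟨snames Γ, ∅⟩

/-! ## Named GS4 derivations -/

/-- Named GS4 derivation trees. -/
inductive Deriv (α : Type) : Type
  | ax (Γ : Finset (NForm α)) (A C : NForm α)
  | cut (A : NForm α) (P Q : Deriv α)
  | sup (P Q : Deriv α)
  | orI (A B : NForm α) (P : Deriv α)
  | andI (A B : NForm α) (P Q : Deriv α)

/-- Conclusion of a derivation tree. -/
def concl : Deriv α → Finset (NForm α)
  | .ax Γ A C => insert A (insert C Γ)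
  | .cut A P _ => (concl P).erase A
  | .sup P _ => concl P
  | .orI A B P => insert (NForm.or A B) (((concl P).erase A).erase B)
  | .andI A B P _ => insert (NForm.and A B) ((concl P).erase A)

/-- Well-formedness of derivation trees w.r.t. the atom involution `bar`:
each rule is applied correctly to sharing-free named sequents. -/
def WF (bar : α → α) : Deriv α → Prop
  | .ax Γ A C =>
      A.shape = (negF bar C).shape ∧
      A.sharingFree ∧ C.sharingFree ∧ SFSet Γ ∧
      Disjoint A.names C.names ∧
      Disjoint A.names (snames Γ) ∧ Disjoint C.names (snames Γ)
  | .cut A P Q =>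
      WF bar P ∧ WF bar Q ∧
      ∃ Γ : Finset (NForm α), A ∉ Γ ∧ negF bar A ∉ Γ ∧
        concl P = insert A Γ ∧ concl Q = insert (negF bar A) Γ ∧
        A.sharingFree ∧ SFSet Γ ∧ Disjoint A.names (snames Γ)
  | .sup P Q => WF bar P ∧ WF bar Q ∧ concl P = concl Q
  | .orI A B P =>
      WF bar P ∧
      ∃ Γ : Finset (NForm α), A ∉ Γ ∧ B ∉ Γ ∧ A ≠ B ∧
        concl P = insert A (insert B Γ) ∧
        A.sharingFree ∧ B.sharingFree ∧ SFSet Γ ∧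
        Disjoint A.names B.names ∧
        Disjoint A.names (snames Γ) ∧ Disjoint B.names (snames Γ)
  | .andI A B P Q =>
      WF bar P ∧ WF bar Q ∧
      ∃ Γ : Finset (NForm α), A ∉ Γ ∧ B ∉ Γ ∧
        concl P = insert A Γ ∧ concl Q = insert B Γ ∧
        A.sharingFree ∧ B.sharingFree ∧ SFSet Γ ∧
        Disjoint A.names B.names ∧
        Disjoint A.names (snames Γ) ∧ Disjoint B.names (snames Γ)

/-- A derivation is cut-free if it contains no cut rule. -/
def CutFree : Deriv α → Prop
  | .ax _ _ _ => True
  | .cut _ _ _ => False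
  | .sup P Q => CutFree P ∧ CutFree Q
  | .orI _ _ P => CutFree P
  | .andI _ _ P Q => CutFree P ∧ CutFree Q

/-- The branch-labeled axiom graph `⟨⟨P⟩⟩` of a derivation. -/
def blaxg : Deriv α → BLGraph
  | .ax Γ A C => blwk (snames Γ) (BrS Γ) (blid A C)
  | .cut A P Q => BLGraph.comp (blaxg P) (blaxg Q) A.names
  | .sup P Q => (blaxg P).union (blaxg Q)
  | .orI _ _ P => blaxg P
  | .andI _ _ P Q => (blaxg P).union (blaxg Q)

/-- The (simple) axiom graph `⟦P⟧` of a derivation. -/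
def axg : Deriv α → NGraph
  | .ax Γ A C => (wkg Γ).union (idg A C)
  | .cut A P Q => NGraph.comp (axg P) (axg Q) A.names
  | .sup P Q => (axg P).union (axg Q)
  | .orI _ _ P => axg P
  | .andI _ _ P Q => (axg P).union (axg Q)

/-! ## Inversion and isolation -/

/-- Inversion of a disjunction `D ∨ E` in the conclusion. -/
def inv (D E : NForm α) : Deriv α → Deriv α
  | .ax Γ A C =>
      if A = NForm.or D E then
        match C with
        | .and C1 C2 =>
            .andI C1 C2 (.ax (insert E Γ) D C1) (.ax (insert D Γ) E C2)
        | _ => .ax Γ A C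
      else if C = NForm.or D E then
        match A with
        | .and A1 A2 =>
            .andI A1 A2 (.ax (insert E Γ) A1 D) (.ax (insert D Γ) A2 E)
        | _ => .ax Γ A C
      else
        .ax (insert D (insert E (Γ.erase (NForm.or D E)))) A C
  | .cut A P Q => .cut A (inv D E P) (inv D E Q)
  | .sup P Q => .sup (inv D E P) (inv D E Q)
  | .orI A B P => if A = D ∧ B = E then P else .orI A B (inv D E P)
  | .andI A B P Q => .andI A B (inv D E P) (inv D E Q)

/-- Left inversion of a conjunction `D ∧ E` in the conclusion. -/
def invl (D E : NForm α) : Deriv α → Deriv α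
  | .ax Γ A C =>
      if A = NForm.and D E then
        match C with
        | .or C1 C2 => .orI C1 C2 (.ax (insert C2 Γ) D C1)
        | _ => .ax Γ A C
      else if C = NForm.and D E then
        match A with
        | .or A1 A2 => .orI A1 A2 (.ax (insert A2 Γ) A1 D)
        | _ => .ax Γ A C
      else
        .ax (insert D (Γ.erase (NForm.and D E))) A C
  | .cut A P Q => .cut A (invl D E P) (invl D E Q)
  | .sup P Q => .sup (invl D E P) (invl D E Q)
  | .orI A B P => .orI A B (invl D E P)
  | .andI A B P Q => if A = D ∧ B = E then P else .andI A B (invl D E P) (invl D E Q)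

/-- Right inversion of a conjunction `D ∧ E` in the conclusion. -/
def invr (D E : NForm α) : Deriv α → Deriv α
  | .ax Γ A C =>
      if A = NForm.and D E then
        match C with
        | .or C1 C2 => .orI C1 C2 (.ax (insert C1 Γ) E C2)
        | _ => .ax Γ A C
      else if C = NForm.and D E then
        match A with
        | .or A1 A2 => .orI A1 A2 (.ax (insert A1 Γ) A2 E)
        | _ => .ax Γ A C
      else
        .ax (insert E (Γ.erase (NForm.and D E))) A C
  | .cut A P Q => .cut A (invr D E P) (invr D E Q)
  | .sup P Q => .sup (invr D E P) (invr D E Q)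
  | .orI A B P => .orI A B (invr D E P)
  | .andI A B P Q => if A = D ∧ B = E then Q else .andI A B (invr D E P) (invr D E Q)

/-- Isolation of a non-atomic formula in the conclusion. -/
def isl : NForm α → Deriv α → Deriv α
  | .or A B, P => .orI A B (inv A B P)
  | .and A B, P => .andI A B (invl A B P) (invr A B P)
  | .atom _ _, P => P

/-- Totality of a bl-graph w.r.t. a sharing-free named sequent. -/
def Total (bar : α → α) (G : BLGraph) (Γ : Finset (NForm α)) : Prop :=
  G.verts = snames Γ ∧
  G.Br = BrS Γ ∧
  ∀ x y : ℕ, s(x, y) ∈ G.Edges →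
    ∀ a b : α, HasAtomS Γ x a → HasAtomS Γ y b → a = bar b

end GS4

/-! Isolation replaces a derivation by its inversions, which change it only at axioms and at the
rules introducing the isolated formula. Deleting such a rule does not affect the axiom graph, and
an isolated formula in the context of an axiom contributes to its graph only its names, which are
those of its immediate subformulas. An axiom on the isolated formula is split into two smaller
ones, whose identity graphs together make up the original one; each of the smaller axioms is
weakened by a formula of the other, so no vertex is added. Left and right inversion of a
conjunction each forget the opposite conjunct, so only the union of their graphs recovers the
original one; this works because union commutes with every rule other than cut. -/

namespace GS4

variable {α : Type} {bar : α → α}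

theorem NGraph.union_union_union_comm (G₁ G₂ H₁ H₂ : NGraph) :
    (G₁.union G₂).union (H₁.union H₂) = (G₁.union H₁).union (G₂.union H₂) :=
  congrArg₂ NGraph.mk (Set.union_union_union_comm ..) (Set.union_union_union_comm ..)

theorem NGraph.union_self (G : NGraph) : G.union G = G :=
  congrArg₂ NGraph.mk (Set.union_self _) (Set.union_self _)

theorem snames_insert (A : NForm α) (Γ : Finset (NForm α)) :
    snames (insert A Γ) = A.names ∪ snames Γ :=
  Finset.set_biUnion_insert ..

theorem names_union_snames_erase {A : NForm α} {Γ : Finset (NForm α)} (h : A ∈ Γ) :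
    A.names ∪ snames (Γ.erase A) = snames Γ := by
  rw [← snames_insert, Finset.insert_erase h]

/-- `IsDual bar A C` is the paper's `A ≡ C̄`, the side condition of the axiom rule, as an inductive
relation following the recursion of the identity graph `idg A C`. -/
inductive IsDual (bar : α → α) : NForm α → NForm α → Prop
  | atom (x y : ℕ) (a : α) : IsDual bar (.atom x (bar a)) (.atom y a)
  | or_and {A₁ A₂ C₁ C₂ : NForm α} (h₁ : IsDual bar A₁ C₁) (h₂ : IsDual bar A₂ C₂) :
      IsDual bar (.or A₁ A₂) (.and C₁ C₂)
  | and_or {A₁ A₂ C₁ C₂ : NForm α} (h₁ : IsDual bar A₁ C₁) (h₂ : IsDual bar A₂ C₂) :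
      IsDual bar (.and A₁ A₂) (.or C₁ C₂)

theorem isDual_of_shape_eq {A C : NForm α} (h : A.shape = (negF bar C).shape) :
    IsDual bar A C := by
  induction A generalizing C with
  | atom x a =>
    cases C <;> simp only [NForm.shape, negF, Shape.atom.injEq, reduceCtorEq] at h
    subst h
    exact .atom ..
  | or A₁ A₂ ih₁ ih₂ =>
    cases C <;> simp only [NForm.shape, negF, Shape.or.injEq, reduceCtorEq] at h
    exact .or_and (ih₁ h.1) (ih₂ h.2)
  | and A₁ A₂ ih₁ ih₂ =>
    cases C <;> simp only [NForm.shape, negF, Shape.and.injEq, reduceCtorEq] at h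
    exact .and_or (ih₁ h.1) (ih₂ h.2)

theorem IsDual.verts_idg {A C : NForm α} (h : IsDual bar A C) :
    (idg A C).verts = A.names ∪ C.names := by
  induction h with
  | atom => rfl
  | or_and _ _ ih₁ ih₂ | and_or _ _ ih₁ ih₂ =>
    simp only [idg, NGraph.union, NForm.names, ih₁, ih₂]
    exact Set.union_union_union_comm ..

theorem IsDual.names_left_subset {A C : NForm α} (h : IsDual bar A C) :
    A.names ⊆ (idg A C).verts :=
  h.verts_idg ▸ Set.subset_union_left

theorem IsDual.names_right_subset {A C : NForm α} (h : IsDual bar A C) :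
    C.names ⊆ (idg A C).verts :=
  h.verts_idg ▸ Set.subset_union_right

theorem axg_ax_insert_union_axg_ax_insert (Γ : Finset (NForm α)) {A₁ C₁ A₂ C₂ B₁ B₂ : NForm α}
    (hB₁ : B₁.names ⊆ (idg A₁ C₁).verts) (hB₂ : B₂.names ⊆ (idg A₂ C₂).verts) :
    (axg (.ax (insert B₂ Γ) A₁ C₁)).union (axg (.ax (insert B₁ Γ) A₂ C₂)) =
      (wkg Γ).union ((idg A₁ C₁).union (idg A₂ C₂)) := by
  simp only [axg, wkg, NGraph.union, NGraph.mk.injEq, snames_insert, Set.empty_union, and_true]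
  grind

theorem wkg_insert_insert_erase_or {D E : NForm α} {Γ : Finset (NForm α)} (h : .or D E ∈ Γ) :
    wkg (insert D (insert E (Γ.erase (.or D E)))) = wkg Γ := by
  simp only [wkg, snames_insert, ← names_union_snames_erase h, NForm.names, Set.union_assoc]

theorem wkg_insert_erase_union_wkg_insert_erase {D E : NForm α} {Γ : Finset (NForm α)}
    (h : .and D E ∈ Γ) :
    (wkg (insert D (Γ.erase (.and D E)))).union (wkg (insert E (Γ.erase (.and D E)))) = wkg Γ := by
  simp only [wkg, NGraph.union, snames_insert, ← names_union_snames_erase h, NForm.names,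
    ← Set.union_union_distrib_right, Set.union_self]

theorem axg_inv_ax {D E A C : NForm α} {Γ : Finset (NForm α)} (hAC : IsDual bar A C)
    (hmem : .or D E ∈ concl (.ax Γ A C)) : axg (inv D E (.ax Γ A C)) = axg (.ax Γ A C) := by
  by_cases hA : A = .or D E
  · subst hA
    cases hAC with
    | or_and h₁ h₂ =>
      simp only [inv, if_true]
      exact axg_ax_insert_union_axg_ax_insert Γ h₁.names_left_subset h₂.names_left_subset
  by_cases hC : C = .or D E
  · subst hC
    cases hAC with
    | and_or h₁ h₂ =>
      simp only [inv, reduceCtorEq, if_false, if_true]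
      exact axg_ax_insert_union_axg_ax_insert Γ h₁.names_right_subset h₂.names_right_subset
  have hΓ : .or D E ∈ Γ := by
    simpa only [concl, Finset.mem_insert, Ne.symm hA, Ne.symm hC, false_or] using hmem
  simp only [inv, if_neg hA, if_neg hC, axg, wkg_insert_insert_erase_or hΓ]

theorem axg_invl_ax_union_axg_invr_ax {D E A C : NForm α} {Γ : Finset (NForm α)}
    (hAC : IsDual bar A C) (hmem : .and D E ∈ concl (.ax Γ A C)) :
    (axg (invl D E (.ax Γ A C))).union (axg (invr D E (.ax Γ A C))) = axg (.ax Γ A C) := by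
  by_cases hA : A = .and D E
  · subst hA
    cases hAC with
    | and_or h₁ h₂ =>
      simp only [invl, invr, if_true]
      exact axg_ax_insert_union_axg_ax_insert Γ h₁.names_right_subset h₂.names_right_subset
  by_cases hC : C = .and D E
  · subst hC
    cases hAC with
    | or_and h₁ h₂ =>
      simp only [invl, invr, reduceCtorEq, if_false, if_true]
      exact axg_ax_insert_union_axg_ax_insert Γ h₁.names_left_subset h₂.names_left_subset
  have hΓ : .and D E ∈ Γ := by
    simpa only [concl, Finset.mem_insert, Ne.symm hA, Ne.symm hC, false_or] using hmem
  simp only [invl, invr, if_neg hA, if_neg hC, axg]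
  rw [NGraph.union_union_union_comm, wkg_insert_erase_union_wkg_insert_erase hΓ,
    NGraph.union_self]

theorem mem_concl_of_mem_concl_cut {A F : NForm α} {P Q : Deriv α} (hP : WF bar (.cut A P Q))
    (hF : F ∈ concl (.cut A P Q)) : F ∈ concl P ∧ F ∈ concl Q := by
  obtain ⟨-, -, Γ, -, -, hconclP, hconclQ, -⟩ := hP
  simp only [concl, hconclP, hconclQ, Finset.mem_erase, Finset.mem_insert] at hF ⊢
  tauto

theorem mem_concl_of_mem_concl_orI {A B F : NForm α} {P : Deriv α}
    (hF : F ∈ concl (.orI A B P)) (hne : F ≠ .or A B) : F ∈ concl P := by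
  simp only [concl, Finset.mem_insert, Finset.mem_erase] at hF
  tauto

theorem mem_concl_of_mem_concl_andI {A B F : NForm α} {P Q : Deriv α}
    (hP : WF bar (.andI A B P Q)) (hF : F ∈ concl (.andI A B P Q)) (hne : F ≠ .and A B) :
    F ∈ concl P ∧ F ∈ concl Q := by
  obtain ⟨-, -, Γ, -, -, hconclP, hconclQ, -⟩ := hP
  simp only [concl, hconclP, hconclQ, Finset.mem_erase, Finset.mem_insert] at hF ⊢
  tauto

theorem axg_inv {D E : NForm α} {P : Deriv α} (hP : WF bar P) (hmem : .or D E ∈ concl P) :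
    axg (inv D E P) = axg P := by
  induction P with
  | ax Γ A C => exact axg_inv_ax (isDual_of_shape_eq hP.1) hmem
  | cut A P Q ihP ihQ =>
    obtain ⟨hmemP, hmemQ⟩ := mem_concl_of_mem_concl_cut hP hmem
    simp only [inv, axg, ihP hP.1 hmemP, ihQ hP.2.1 hmemQ]
  | sup P Q ihP ihQ =>
    obtain ⟨hP, hQ, hconcl⟩ := hP
    simp only [inv, axg, ihP hP hmem, ihQ hQ (hconcl ▸ hmem)]
  | orI A B P ih =>
    by_cases hprincipal : A = D ∧ B = E
    · simp only [inv, if_pos hprincipal, axg]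
    · have hmemP : .or D E ∈ concl P := mem_concl_of_mem_concl_orI hmem (by grind)
      simp only [inv, if_neg hprincipal, axg, ih hP.1 hmemP]
  | andI A B P Q ihP ihQ =>
    obtain ⟨hmemP, hmemQ⟩ := mem_concl_of_mem_concl_andI hP hmem nofun
    simp only [inv, axg, ihP hP.1 hmemP, ihQ hP.2.1 hmemQ]

theorem axg_invl_union_axg_invr {D E : NForm α} {P : Deriv α} (hP : WF bar P) (hcf : CutFree P)
    (hmem : .and D E ∈ concl P) : (axg (invl D E P)).union (axg (invr D E P)) = axg P := by
  induction P with
  | ax Γ A C => exact axg_invl_ax_union_axg_invr_ax (isDual_of_shape_eq hP.1) hmem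
  | cut A P Q => exact hcf.elim
  | sup P Q ihP ihQ =>
    obtain ⟨hP, hQ, hconcl⟩ := hP
    simp only [invl, invr, axg]
    rw [NGraph.union_union_union_comm, ihP hP hcf.1 hmem, ihQ hQ hcf.2 (hconcl ▸ hmem)]
  | orI A B P ih => exact ih hP.1 hcf (mem_concl_of_mem_concl_orI hmem nofun)
  | andI A B P Q ihP ihQ =>
    by_cases hprincipal : A = D ∧ B = E
    · simp only [invl, invr, if_pos hprincipal, axg]
    · obtain ⟨hmemP, hmemQ⟩ := mem_concl_of_mem_concl_andI hP hmem (by grind)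
      simp only [invl, invr, if_neg hprincipal, axg]
      rw [NGraph.union_union_union_comm, ihP hP.1 hcf.1 hmemP, ihQ hP.2.1 hcf.2 hmemQ]

end GS4

/-- for cut-free derivations the axiom graph is invariant under
isolation of a non-atomic formula in the conclusion. -/
theorem GS4.axg_isl_cutfree {α : Type} (bar : α → α)
    (hbar : Function.Involutive bar) (hfix : ∀ a, bar a ≠ a)
    (P : GS4.Deriv α) (hP : GS4.WF bar P) (hcf : GS4.CutFree P)
    (A : GS4.NForm α) (hA : A ∈ GS4.concl P) (hnonatom : ¬ A.isAtom) :
    GS4.axg (GS4.isl A P) = GS4.axg P := by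
  cases A with
  | atom x a => exact (hnonatom trivial).elim
  | or D E => exact axg_inv hP hA
  | and D E => exact axg_invl_union_axg_invr hP hcf hA
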